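/- Let n ≥ 2, 1 < k ≤ n, and let a ∈ ℝ^{n+1} \ {0}. Suppose f and g are continuous functions on S^n satisfying f(R_a x) = f(x) and g(R_a x) = g(x) for all x ∈ S^n, and suppose ∫_{S^n ∩ ζ} f dH^{k−1} = ∫_{S^n ∩ ζ} g dH^{k−1} for every k-dimensional affine plane ζ parallel to the vector a and meeting the open unit ball B^{n+1}. Then f = g on S^n. -/

import Mathlib

open MeasureTheory Metric Matrix
open scoped InnerProductSpace ENNReal

/-- `Euc m` is the Euclidean space `ℝ^m`. -/
abbrev Euc (m : ℕ) : Type := EuclideanSpace ℝ (Fin m)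

/-- The Möbius transformation `φ_b x = (b − P_b x − s_b Q_b x)/(1 − x·b)`,
where `P_b x = ((b·x)/|b|²) b`, `Q_b x = x − P_b x`, `s_b = √(1 − |b|²)`. -/
noncomputable def phiMap {n : ℕ} (b x : Euc (n + 1)) : Euc (n + 1) :=
  (1 - ⟪x, b⟫_ℝ)⁻¹ •
    (b - (⟪b, x⟫_ℝ / ‖b‖ ^ 2) • b -
      Real.sqrt (1 - ‖b‖ ^ 2) • (x - (⟪b, x⟫_ℝ / ‖b‖ ^ 2) • b))

/-- `a* = a/|a|²`, the inversion of `a` in the unit sphere. -/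
noncomputable def aStar {n : ℕ} (a : Euc (n + 1)) : Euc (n + 1) := (‖a‖ ^ 2)⁻¹ • a

/-- `s_{a*} = √(1 − |a*|²)`. -/
noncomputable def sStar {n : ℕ} (a : Euc (n + 1)) : ℝ := Real.sqrt (1 - ‖aStar a‖ ^ 2)

/-- The reflection `R_a x = x − 2((x·a)/|a|²) a` in the hyperplane `a^⊥`. -/
noncomputable def reflMap {n : ℕ} (a x : Euc (n + 1)) : Euc (n + 1) :=
  x - ((2 * ⟪x, a⟫_ℝ) / ‖a‖ ^ 2) • a

/-- `τ_a x = ((|a|² − 1) x + 2(1 − x·a) a)/|x − a|²`, the second point at which the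
line through `a` and `x` meets the unit sphere. -/
noncomputable def tauMap {n : ℕ} (a x : Euc (n + 1)) : Euc (n + 1) :=
  (‖x - a‖ ^ 2)⁻¹ • ((‖a‖ ^ 2 - 1) • x + (2 * (1 - ⟪x, a⟫_ℝ)) • a)

/-!
Put `h = f - g`. For `ξ ⊥ a` choose a `k`-dimensional subspace `V` with `a ∈ V ⊆ ξᗮ`. The sphere
measure disintegrates over the slices by the translates `w + V`, and `exp (i⟪·, ξ⟫)` is constant on
each of them, so `∫ h exp (i⟪·, ξ⟫)` over the sphere vanishes. Hence the image of `h σ` under the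
orthogonal projection onto `aᗮ` has zero Fourier transform; since `h` is even in the direction `a`,
it factors through this projection, and `h = 0`.

The disintegration produces the cone measure on the unit sphere of `V`, whereas the hypothesis is
about Hausdorff measure. Both are finite and give equal mass to balls of equal radius, so they are
proportional by Christensen's uniqueness theorem for uniformly distributed measures.
-/

section UniformlyDistributed

variable {X : Type*} [PseudoMetricSpace X] [MeasurableSpace X]

/-- A measure is *uniformly distributed* if any two balls of the same radius have the same
measure. Up to scaling, there is at most one such finite measure on a compact space
(`IsUniformlyDistributed.smul_eq_smul`). -/
def IsUniformlyDistributed (μ : Measure X) : Prop :=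
  ∀ x y r, μ (ball x r) = μ (ball y r)

namespace IsUniformlyDistributed

variable {μ ν : Measure X} [SecondCountableTopology X]

theorem measure_ball_pos (hμ : IsUniformlyDistributed μ) (hμ₀ : μ ≠ 0) (x : X) {r : ℝ}
    (hr : 0 < r) : 0 < μ (ball x r) := by
  contrapose! hμ₀
  have hnull : ∀ y, μ (ball y r) = 0 := fun y => (hμ y x r).trans (nonpos_iff_eq_zero.mp hμ₀)
  exact Measure.measure_univ_eq_zero.mp <| measure_null_of_locally_null _ fun y _ =>
    ⟨ball y r, mem_nhdsWithin_of_mem_nhds (ball_mem_nhds y hr), hnull y⟩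

variable [BorelSpace X]

theorem fst_restrict_prod_dist_lt [SFinite ν] (hν : IsUniformlyDistributed ν) (x : X) (δ : ℝ) :
    ((μ.prod ν).restrict {p | dist p.1 p.2 < δ}).fst = ν (ball x δ) • μ := by
  ext s hs
  have hD : MeasurableSet {p : X × X | dist p.1 p.2 < δ} :=
    (isOpen_lt continuous_dist continuous_const).measurableSet
  rw [Measure.fst_apply hs, Measure.restrict_apply (measurable_fst hs),
    Measure.prod_apply ((measurable_fst hs).inter hD)]
  have hsection : ∀ y, ν (Prod.mk y ⁻¹' (Prod.fst ⁻¹' s ∩ {p : X × X | dist p.1 p.2 < δ})) =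
      s.indicator (fun _ => ν (ball x δ)) y := fun y => by
    by_cases hy : y ∈ s
    · rw [Set.indicator_of_mem hy, ← hν y x δ]
      congr 1
      ext z
      simp [hy, dist_comm]
    · rw [Set.indicator_of_notMem hy, Set.preimage_inter, ← Set.preimage_comp]
      simp [Function.comp_def, hy]
  simp only [hsection, lintegral_indicator_const hs, Measure.smul_apply, smul_eq_mul]

theorem snd_restrict_prod_dist_lt [SFinite μ] [SFinite ν] (hμ : IsUniformlyDistributed μ) (x : X)
    (δ : ℝ) : ((μ.prod ν).restrict {p | dist p.1 p.2 < δ}).snd = μ (ball x δ) • ν := by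
  have hD : MeasurableSet {p : X × X | dist p.1 p.2 < δ} :=
    (isOpen_lt continuous_dist continuous_const).measurableSet
  rw [← fst_restrict_prod_dist_lt hμ, ← Measure.fst_map_swap, ← Measure.prod_swap (μ := ν),
    Measure.restrict_map measurable_swap hD]
  simp [dist_comm, Set.preimage]

theorem dist_mul_integral_le [IsFiniteMeasure μ] [IsFiniteMeasure ν]
    (hμ : IsUniformlyDistributed μ) (hν : IsUniformlyDistributed ν) {F : X → ℝ}
    (hFμ : Integrable F μ) (hFν : Integrable F ν) {δ ε : ℝ}
    (hF : ∀ x y, dist x y < δ → dist (F x) (F y) ≤ ε) (x : X) :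
    dist (ν.real (ball x δ) * ∫ y, F y ∂μ) (μ.real (ball x δ) * ∫ y, F y ∂ν) ≤
      ε * (ν.real (ball x δ) * μ.real .univ) := by
  -- `π` couples `ν (ball x δ) • μ` with `μ (ball x δ) • ν` through pairs at distance `< δ`.
  set D := {p : X × X | dist p.1 p.2 < δ}
  have hD : MeasurableSet D := (isOpen_lt continuous_dist continuous_const).measurableSet
  set π := (μ.prod ν).restrict D
  have hfst : π.map Prod.fst = ν (ball x δ) • μ := hν.fst_restrict_prod_dist_lt x δ
  have hsnd : π.map Prod.snd = μ (ball x δ) • ν := hμ.snd_restrict_prod_dist_lt x δ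
  have hF₁ : Integrable F (π.map Prod.fst) := hfst ▸ hFμ.smul_measure (measure_ne_top _ _)
  have hF₂ : Integrable F (π.map Prod.snd) := hsnd ▸ hFν.smul_measure (measure_ne_top _ _)
  have hπ : π.real .univ = ν.real (ball x δ) * μ.real .univ := by
    rw [measureReal_def, ← Measure.fst_univ, Measure.fst, hfst]
    simp [measureReal_def]
  calc dist (ν.real (ball x δ) * ∫ y, F y ∂μ) (μ.real (ball x δ) * ∫ y, F y ∂ν)
      = ‖∫ p, ((F ∘ Prod.fst) p - (F ∘ Prod.snd) p) ∂π‖ := by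
        rw [integral_sub (hF₁.comp_measurable measurable_fst)
            (hF₂.comp_measurable measurable_snd), Function.comp_def, Function.comp_def,
          ← integral_map measurable_fst.aemeasurable hF₁.1,
          ← integral_map measurable_snd.aemeasurable hF₂.1, hfst, hsnd, integral_smul_measure,
          integral_smul_measure, dist_eq_norm]
        rfl
    _ ≤ ε * π.real .univ := norm_integral_le_of_norm_le_const <|
        (ae_restrict_mem hD).mono fun p hp => hF p.1 p.2 hp
    _ = ε * (ν.real (ball x δ) * μ.real .univ) := by rw [hπ]

theorem measureReal_ball_mul_univ_comm [IsFiniteMeasure μ] [IsFiniteMeasure ν]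
    (hμ : IsUniformlyDistributed μ) (hν : IsUniformlyDistributed ν) (x : X) (δ : ℝ) :
    ν.real (ball x δ) * μ.real .univ = μ.real (ball x δ) * ν.real .univ := by
  simpa using hμ.dist_mul_integral_le hν (F := fun _ => 1) (ε := 0) (δ := δ)
    (integrable_const _) (integrable_const _) (by simp) x

variable [CompactSpace X]

theorem univ_mul_integral_eq [IsFiniteMeasure μ] [IsFiniteMeasure ν]
    (hμ : IsUniformlyDistributed μ) (hν : IsUniformlyDistributed ν)
    (F : BoundedContinuousFunction X ℝ) :
    μ.real .univ * ∫ x, F x ∂ν = ν.real .univ * ∫ x, F x ∂μ := by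
  obtain rfl | hμ₀ := eq_or_ne μ 0
  · simp
  obtain rfl | hν₀ := eq_or_ne ν 0
  · simp
  obtain ⟨x⟩ : Nonempty X := (isEmpty_or_nonempty X).resolve_left fun _ => hμ₀ μ.eq_zero_of_isEmpty
  have hM : 0 < μ.real .univ := by simpa [measureReal_def, ENNReal.toReal_pos_iff, pos_iff_ne_zero]
  have hN : 0 < ν.real .univ := by simpa [measureReal_def, ENNReal.toReal_pos_iff, pos_iff_ne_zero]
  refine eq_of_forall_dist_le fun ε hε => ?_
  set η := ε / (μ.real .univ * ν.real .univ)
  obtain ⟨δ, hδ, hFδ⟩ := Metric.uniformContinuous_iff.mp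
    (CompactSpace.uniformContinuous_of_continuous F.continuous) η (by positivity)
  have hball : 0 < μ.real (ball x δ) :=
    ENNReal.toReal_pos (hμ.measure_ball_pos hμ₀ x hδ).ne' (measure_ne_top _ _)
  have hcomm := hμ.measureReal_ball_mul_univ_comm hν x δ
  refine le_of_mul_le_mul_left ?_ hball
  calc μ.real (ball x δ) * dist (μ.real .univ * ∫ y, F y ∂ν) (ν.real .univ * ∫ y, F y ∂μ)
      = μ.real .univ * dist (ν.real (ball x δ) * ∫ y, F y ∂μ)
          (μ.real (ball x δ) * ∫ y, F y ∂ν) := by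
        simp only [Real.dist_eq]
        nth_rw 1 [← abs_of_pos hball]
        nth_rw 2 [← abs_of_pos hM]
        rw [← abs_mul, ← abs_mul, mul_sub, mul_sub, ← mul_assoc _ (ν.real _), ← hcomm,
          abs_sub_comm]
        ring_nf
    _ ≤ μ.real .univ * (η * (ν.real (ball x δ) * μ.real .univ)) := by
        gcongr
        exact hμ.dist_mul_integral_le hν (F.integrable μ) (F.integrable ν)
          (fun y z hyz => (hFδ hyz).le) x
    _ = μ.real (ball x δ) * ε := by
        rw [hcomm]
        simp only [η]
        field_simp

theorem smul_eq_smul [IsFiniteMeasure μ] [IsFiniteMeasure ν]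
    (hμ : IsUniformlyDistributed μ) (hν : IsUniformlyDistributed ν) :
    μ .univ • ν = ν .univ • μ := by
  have := ν.smul_finite (measure_ne_top μ .univ)
  have := μ.smul_finite (measure_ne_top ν .univ)
  refine ext_of_forall_integral_eq_of_IsFiniteMeasure fun F => ?_
  rw [integral_smul_measure, integral_smul_measure]
  exact hμ.univ_mul_integral_eq hν F

end IsUniformlyDistributed

end UniformlyDistributed

section HemisphereLift

variable {E : Type*} [NormedAddCommGroup E] [InnerProductSpace ℝ E] {a : E}

/-- The graph parametrization of the closed unit hemisphere `{x | ‖x‖ = 1, 0 ≤ ⟪a, x⟫}` over the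
unit ball of the hyperplane `aᗮ`. The junk value `√t = 0` for `t < 0` extends it to a continuous
map on the whole hyperplane. -/
noncomputable def hemisphereLift (a : E) (y : (ℝ ∙ a)ᗮ) : E :=
  y + (√(1 - ‖y‖ ^ 2) / ‖a‖) • a

theorem continuous_hemisphereLift (a : E) : Continuous (hemisphereLift a) := by
  unfold hemisphereLift
  fun_prop

theorem contDiffAt_hemisphereLift_zero (a : E) : ContDiffAt ℝ 1 (hemisphereLift a) 0 := by
  have hsqrt : ContDiffAt ℝ 1 (fun y : (ℝ ∙ a)ᗮ => √(1 - ‖y‖ ^ 2)) 0 :=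
    (contDiffAt_const.sub (contDiff_norm_sq ℝ).contDiffAt).sqrt (by simp)
  exact (ℝ ∙ a)ᗮ.subtypeL.contDiff.contDiffAt.add ((hsqrt.div_const _).smul contDiffAt_const)

theorem norm_hemisphereLift (ha : a ≠ 0) {y : (ℝ ∙ a)ᗮ} (hy : ‖y‖ ≤ 1) :
    ‖hemisphereLift a y‖ = 1 := by
  have horth : ⟪(y : E), (√(1 - ‖y‖ ^ 2) / ‖a‖) • a⟫_ℝ = 0 := by
    rw [inner_smul_right, Submodule.mem_orthogonal_singleton_iff_inner_left.mp y.2, mul_zero]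
  have hy' : 0 ≤ 1 - ‖y‖ ^ 2 := by nlinarith [norm_nonneg y]
  rw [← sq_eq_sq₀ (norm_nonneg _) zero_le_one, hemisphereLift, norm_add_sq_real, horth, norm_smul,
    norm_div, norm_norm, div_mul_cancel₀ _ (norm_ne_zero_iff.mpr ha), Real.norm_eq_abs, sq_abs,
    Real.sq_sqrt hy', Submodule.coe_norm]
  ring

theorem orthogonalProjectionOnto_hemisphereLift (y : (ℝ ∙ a)ᗮ) :
    (ℝ ∙ a)ᗮ.orthogonalProjectionOnto (hemisphereLift a y) = y := by
  rw [hemisphereLift, map_add, map_smul, Submodule.orthogonalProjectionOnto_mem_subspace_eq_self,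
    Submodule.orthogonalProjectionOnto_orthogonalComplement_singleton_eq_zero, smul_zero, add_zero]

theorem hemisphereLift_orthogonalProjectionOnto (ha : a ≠ 0) {x : E} (hx : ‖x‖ = 1)
    (hax : 0 ≤ ⟪a, x⟫_ℝ) : hemisphereLift a ((ℝ ∙ a)ᗮ.orthogonalProjectionOnto x) = x := by
  have hna : ‖a‖ ≠ 0 := norm_ne_zero_iff.mpr ha
  have hdecomp := (ℝ ∙ a).starProjection_add_starProjection_orthogonal x
  have hpythagoras := (ℝ ∙ a).norm_sq_eq_add_norm_sq_starProjection x
  rw [Submodule.starProjection_singleton, RCLike.ofReal_real_eq_id, id] at hdecomp hpythagoras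
  have hheight : 1 - ‖(ℝ ∙ a)ᗮ.orthogonalProjectionOnto x‖ ^ 2 = (⟪a, x⟫_ℝ / ‖a‖) ^ 2 := by
    rw [norm_smul, mul_pow, Real.norm_eq_abs, sq_abs, hx,
      Submodule.starProjection_apply] at hpythagoras
    rw [Submodule.coe_norm]
    field_simp at hpythagoras ⊢
    linarith
  rw [hemisphereLift, hheight, Real.sqrt_sq (by positivity), div_div, ← sq]
  exact (add_comm _ _).trans hdecomp

theorem hemisphereLift_orthogonalProjectionOnto_eq_or (ha : a ≠ 0) {x : E} (hx : ‖x‖ = 1) :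
    hemisphereLift a ((ℝ ∙ a)ᗮ.orthogonalProjectionOnto x) = x ∨
      hemisphereLift a ((ℝ ∙ a)ᗮ.orthogonalProjectionOnto x) = (ℝ ∙ a)ᗮ.reflection x := by
  obtain hax | hax := le_total 0 ⟪a, x⟫_ℝ
  · exact .inl (hemisphereLift_orthogonalProjectionOnto ha hx hax)
  · have hρa : ⟪a, (ℝ ∙ a)ᗮ.reflection x⟫_ℝ = -⟪a, x⟫_ℝ := by
      rw [← (ℝ ∙ a)ᗮ.reflection.inner_map_map a x,
        Submodule.reflection_orthogonalComplement_singleton_eq_neg, inner_neg_left, neg_neg]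
    have hPρ : (ℝ ∙ a)ᗮ.orthogonalProjectionOnto ((ℝ ∙ a)ᗮ.reflection x) =
        (ℝ ∙ a)ᗮ.orthogonalProjectionOnto x := by
      rw [Submodule.reflection_apply, map_sub, map_nsmul, Submodule.starProjection_apply,
        Submodule.orthogonalProjectionOnto_mem_subspace_eq_self, two_smul, add_sub_cancel_right]
    rw [← hPρ]
    exact .inr <| hemisphereLift_orthogonalProjectionOnto ha (by simpa using hx)
      (by rw [hρa]; linarith)

end HemisphereLift

section SphereMeasure

variable {E : Type*} [NormedAddCommGroup E] [InnerProductSpace ℝ E]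

theorem exists_linearIsometryEquiv_image_ball_sphere (x y : sphere (0 : E) 1) (r : ℝ) :
    ∃ ρ : E ≃ₗᵢ[ℝ] E, ρ '' ((↑) '' ball x r) = (↑) '' ball y r := by
  have hxy := Submodule.reflection_sub
    ((norm_eq_of_mem_sphere x).trans (norm_eq_of_mem_sphere y).symm)
  refine ⟨(ℝ ∙ ((x : E) - y))ᗮ.reflection, ?_⟩
  rw [Subtype.image_ball, Subtype.image_ball, Set.image_inter (LinearIsometryEquiv.injective _),
    LinearIsometryEquiv.image_ball, hxy, Set.ofPred_mem_eq, LinearIsometryEquiv.image_sphere,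
    map_zero]

theorem cast_finrank_orthogonal_span_singleton [FiniteDimensional ℝ E] {a : E} (ha : a ≠ 0) :
    (Module.finrank ℝ (ℝ ∙ a)ᗮ : ℝ) = (Module.finrank ℝ E : ℝ) - 1 := by
  rw [← (ℝ ∙ a).finrank_add_finrank_orthogonal, finrank_span_singleton ha]
  push_cast
  ring

theorem cast_finrank_sub_one_nonneg [FiniteDimensional ℝ E] [Nontrivial E] :
    0 ≤ (Module.finrank ℝ E : ℝ) - 1 :=
  sub_nonneg.mpr (mod_cast Module.finrank_pos (R := ℝ) (M := E))

variable [MeasurableSpace E] [BorelSpace E]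

theorem isUniformlyDistributed_hausdorffMeasure_sphere {d : ℝ} (hd : 0 ≤ d) :
    IsUniformlyDistributed (μH[d] : Measure (sphere (0 : E) 1)) := fun x y r => by
  obtain ⟨ρ, hρ⟩ := exists_linearIsometryEquiv_image_ball_sphere x y r
  rw [← isometry_subtype_coe.hausdorffMeasure_image (.inl hd) (ball x r),
    ← isometry_subtype_coe.hausdorffMeasure_image (.inl hd) (ball y r), ← hρ,
    ρ.isometry.hausdorffMeasure_image (.inl hd)]

variable [FiniteDimensional ℝ E]

theorem hausdorffMeasure_sphere_lt_top :
    μH[(Module.finrank ℝ E : ℝ) - 1] (sphere (0 : E) 1) < ∞ := by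
  refine (isCompact_sphere 0 1).measure_lt_top_of_nhdsWithin fun e he => ?_
  rw [mem_sphere_zero_iff_norm] at he
  have he₀ : e ≠ 0 := norm_ne_zero_iff.mp (he ▸ one_ne_zero)
  set P := (ℝ ∙ e)ᗮ.orthogonalProjectionOnto
  have hPe : P e = 0 := Submodule.orthogonalProjectionOnto_orthogonalComplement_singleton_eq_zero e
  obtain ⟨K, t, ht, hK⟩ := (contDiffAt_hemisphereLift_zero e).exists_lipschitzOnWith
  have hcap : {x ∈ sphere (0 : E) 1 | P x ∈ t ∩ ball 0 1 ∧ 0 < ⟪e, x⟫_ℝ} ∈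
      nhdsWithin e (sphere 0 1) := by
    refine Filter.inter_mem self_mem_nhdsWithin <|
      mem_nhdsWithin_of_mem_nhds <| Filter.inter_mem ?_ ?_
    · exact P.continuous.continuousAt.preimage_mem_nhds <| by
        rw [hPe]
        exact Filter.inter_mem ht (ball_mem_nhds 0 one_pos)
    · exact continuousAt_const.eventually_lt (continuousAt_const.inner continuousAt_id)
        (real_inner_self_pos.mpr he₀)
  refine ⟨_, hcap, ?_⟩
  rw [← cast_finrank_orthogonal_span_singleton he₀]
  calc μH[Module.finrank ℝ (ℝ ∙ e)ᗮ] {x ∈ sphere (0 : E) 1 | P x ∈ t ∩ ball 0 1 ∧ 0 < ⟪e, x⟫_ℝ}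
      ≤ μH[Module.finrank ℝ (ℝ ∙ e)ᗮ] (hemisphereLift e '' (t ∩ ball 0 1)) :=
        measure_mono fun x ⟨hx, hPx, hex⟩ => ⟨P x, hPx,
          hemisphereLift_orthogonalProjectionOnto he₀ (mem_sphere_zero_iff_norm.mp hx) hex.le⟩
    _ ≤ K ^ (Module.finrank ℝ (ℝ ∙ e)ᗮ : ℝ) * μH[Module.finrank ℝ (ℝ ∙ e)ᗮ] (t ∩ ball 0 1) :=
        (hK.mono Set.inter_subset_left).hausdorffMeasure_image_le (Nat.cast_nonneg _)
    _ < ∞ := ENNReal.mul_lt_top (by simp) <|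
        (measure_mono Set.inter_subset_right).trans_lt measure_ball_lt_top

theorem hausdorffMeasure_sphere_pos [Nontrivial E] :
    0 < μH[(Module.finrank ℝ E : ℝ) - 1] (sphere (0 : E) 1) := by
  obtain ⟨e, he⟩ := exists_ne (0 : E)
  rw [← cast_finrank_orthogonal_span_singleton he]
  calc 0 < μH[Module.finrank ℝ (ℝ ∙ e)ᗮ] (ball (0 : (ℝ ∙ e)ᗮ) 1) := measure_ball_pos _ _ one_pos
    _ ≤ μH[Module.finrank ℝ (ℝ ∙ e)ᗮ] ((ℝ ∙ e)ᗮ.orthogonalProjectionOnto '' sphere (0 : E) 1) :=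
        measure_mono fun y hy => ⟨hemisphereLift e y,
          mem_sphere_zero_iff_norm.mpr (norm_hemisphereLift he (mem_ball_zero_iff.mp hy).le),
          orthogonalProjectionOnto_hemisphereLift y⟩
    _ ≤ μH[Module.finrank ℝ (ℝ ∙ e)ᗮ] (sphere (0 : E) 1) :=
        hausdorffMeasure_orthogonalProjectionOnto_le _ _ _ (Nat.cast_nonneg _)

open scoped Pointwise in
theorem isUniformlyDistributed_toSphere :
    IsUniformlyDistributed (volume : Measure E).toSphere := fun x y r => by
  obtain ⟨ρ, hρ⟩ := exists_linearIsometryEquiv_image_ball_sphere x y r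
  have hcone : Set.Ioo (0 : ℝ) 1 • ((↑) '' ball y r : Set E) =
      ρ '' (Set.Ioo (0 : ℝ) 1 • ((↑) '' ball x r)) := by
    rw [← hρ, ← Set.image2_smul, ← Set.image2_smul, Set.image2_image_right, Set.image_image2]
    simp only [map_smul]
  rw [Measure.toSphere_apply' _ measurableSet_ball, Measure.toSphere_apply' _ measurableSet_ball,
    hcone, ← ρ.measurePreserving.measure_preimage_emb ρ.toHomeomorph.measurableEmbedding (ρ '' _),
    Set.preimage_image_eq _ ρ.injective]

theorem hausdorffMeasure_sphere_univ [Nontrivial E] :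
    (μH[(Module.finrank ℝ E : ℝ) - 1] : Measure (sphere (0 : E) 1)) .univ =
      μH[(Module.finrank ℝ E : ℝ) - 1] (sphere (0 : E) 1) := by
  rw [← isometry_subtype_coe.hausdorffMeasure_image (.inl cast_finrank_sub_one_nonneg),
    Set.image_univ, Subtype.range_coe]

instance isFiniteMeasure_hausdorffMeasure_sphere [Nontrivial E] :
    IsFiniteMeasure (μH[(Module.finrank ℝ E : ℝ) - 1] : Measure (sphere (0 : E) 1)) :=
  ⟨hausdorffMeasure_sphere_univ.trans_lt hausdorffMeasure_sphere_lt_top⟩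

theorem exists_toSphere_eq_smul_hausdorffMeasure [Nontrivial E] :
    ∃ c : ℝ≥0∞, (volume : Measure E).toSphere = c • μH[(Module.finrank ℝ E : ℝ) - 1] := by
  set μ : Measure (sphere (0 : E) 1) := μH[(Module.finrank ℝ E : ℝ) - 1]
  have hμ : μ .univ ≠ 0 := (hausdorffMeasure_sphere_univ.trans_gt hausdorffMeasure_sphere_pos).ne'
  refine ⟨(μ .univ)⁻¹ * (volume : Measure E).toSphere .univ, ?_⟩
  rw [mul_smul, ← (isUniformlyDistributed_hausdorffMeasure_sphere
    cast_finrank_sub_one_nonneg).smul_eq_smul isUniformlyDistributed_toSphere, ← mul_smul,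
    ENNReal.inv_mul_cancel hμ (measure_ne_top _ _), one_smul]

end SphereMeasure

section Polar

variable {E G : Type*} [NormedAddCommGroup E] [NormedSpace ℝ E] [FiniteDimensional ℝ E]
  [MeasurableSpace E] [BorelSpace E] (μ : Measure E) [μ.IsAddHaarMeasure]
  [NormedAddCommGroup G]

theorem integrableOn_ball_comp_normalize {F : E → G} (hF : Continuous F) (r : ℝ) :
    IntegrableOn (fun x => F (NormedSpace.normalize x)) (ball 0 r) μ := by
  obtain ⟨C, hC⟩ := (isCompact_closedBall (0 : E) 1).exists_bound_of_continuousOn hF.continuousOn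
  have hmeas : Measurable (NormedSpace.normalize : E → E) := by
    unfold NormedSpace.normalize
    fun_prop
  refine .of_bound measure_ball_lt_top
    (hF.stronglyMeasurable.comp_measurable hmeas).aestronglyMeasurable C
    (.of_forall fun x => hC _ ?_)
  rw [mem_closedBall_zero_iff, NormedSpace.normalize, norm_smul, norm_inv, norm_norm]
  exact inv_mul_le_one

variable [NormedSpace ℝ G]

theorem integral_eq_integral_integral_toSphere [Nontrivial E] {F : E → G} (hF : Integrable F μ) :
    ∫ x, F x ∂μ = ∫ r, ∫ θ, F ((r : ℝ) • (θ : E)) ∂μ.toSphere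
      ∂Measure.volumeIoiPow (Module.finrank ℝ E - 1) := by
  have hpolar := μ.measurePreserving_homeomorphUnitSphereProd
  have hemb := (homeomorphUnitSphereProd E).measurableEmbedding
  set F' : sphere (0 : E) 1 × Set.Ioi (0 : ℝ) → G := fun p => F ((p.2 : ℝ) • (p.1 : E))
  have hF' : F' ∘ homeomorphUnitSphereProd E = F ∘ (↑) := by
    ext x
    simp [F', smul_smul, mul_inv_cancel₀ (norm_ne_zero_iff.mpr x.2)]
  have hint : Integrable F' (μ.toSphere.prod (.volumeIoiPow (Module.finrank ℝ E - 1))) := by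
    rw [← hpolar.integrable_comp_emb hemb, hF',
      ← integrableOn_iff_comap_subtypeVal (measurableSet_singleton _).compl]
    exact hF.integrableOn
  calc ∫ x, F x ∂μ = ∫ x : ({0}ᶜ : Set E), (F' ∘ homeomorphUnitSphereProd E) x
        ∂μ.comap (↑) := by
        rw [hF']
        exact (restrict_compl_singleton (μ := μ) 0 ▸
          (integral_subtype_comap (measurableSet_singleton (0 : E)).compl F).symm :)
    _ = ∫ p, F' p ∂μ.toSphere.prod (.volumeIoiPow (Module.finrank ℝ E - 1)) :=
        hpolar.integral_comp hemb F'
    _ = _ := integral_prod_symm _ hint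

theorem setIntegral_ball_comp_normalize [Nontrivial E] [CompleteSpace G] {F : E → G}
    (hF : Continuous F) :
    ∫ x in ball 0 1, F (NormedSpace.normalize x) ∂μ =
      (Module.finrank ℝ E : ℝ)⁻¹ • ∫ θ, F θ ∂μ.toSphere := by
  set n := Module.finrank ℝ E
  have hn : n - 1 + 1 = n := Nat.sub_add_cancel Module.finrank_pos
  have hint := (integrableOn_ball_comp_normalize μ hF 1).integrable_indicator measurableSet_ball
  have hradial : ∀ r : Set.Ioi (0 : ℝ), ∫ θ, (ball (0 : E) 1).indicator
      (fun x => F (NormedSpace.normalize x)) ((r : ℝ) • (θ : E)) ∂μ.toSphere =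
        (Set.Iio ⟨1, Set.mem_Ioi.mpr one_pos⟩).indicator (fun _ => ∫ θ, F θ ∂μ.toSphere) r :=
      fun r => by
        have hr : 0 < (r : ℝ) := r.2
        have hmem : ∀ θ : sphere (0 : E) 1, (r : ℝ) • (θ : E) ∈ ball 0 1 ↔
            r ∈ Set.Iio (⟨1, Set.mem_Ioi.mpr one_pos⟩ : Set.Ioi (0 : ℝ)) := fun θ => by
          simp [norm_smul, abs_of_pos hr, ← Subtype.coe_lt_coe]
        have hnormalize : ∀ θ : sphere (0 : E) 1, NormedSpace.normalize ((r : ℝ) • (θ : E)) = θ :=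
          fun θ => by rw [NormedSpace.normalize_smul_of_pos hr,
            NormedSpace.normalize_eq_self_of_norm_eq_one (norm_eq_of_mem_sphere θ)]
        simp only [Set.indicator, hmem, hnormalize]
        split_ifs <;> simp
  rw [← integral_indicator measurableSet_ball, integral_eq_integral_integral_toSphere μ hint]
  simp only [hradial]
  rw [integral_indicator_const _ measurableSet_Iio, measureReal_def,
    Measure.volumeIoiPow_apply_Iio, one_pow, ENNReal.toReal_ofReal (by positivity), one_div]
  norm_cast
  rw [hn]

end Polar

section Dilation

variable {X Y : Type*} [MetricSpace X] [MeasurableSpace X] [BorelSpace X] [MetricSpace Y]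
  [MeasurableSpace Y] [BorelSpace Y] {d : ℝ}

theorem hausdorffMeasure_image_dilation (hd : 0 ≤ d) (f : X →ᵈ Y) (s : Set X) :
    μH[d] (f '' s) = (Dilation.ratio f : ℝ≥0∞) ^ d * μH[d] s := by
  refine ((Dilation.lipschitz f).hausdorffMeasure_image_le hd s).antisymm ?_
  have hr : (Dilation.ratio f : ℝ≥0∞) ≠ 0 := by simpa using Dilation.ratio_ne_zero f
  calc (Dilation.ratio f : ℝ≥0∞) ^ d * μH[d] s
      ≤ (Dilation.ratio f : ℝ≥0∞) ^ d * (((Dilation.ratio f)⁻¹ : NNReal) ^ d * μH[d] (f '' s)) := by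
        gcongr
        exact (Dilation.antilipschitz f).le_hausdorffMeasure_image hd s
    _ = μH[d] (f '' s) := by
        rw [← mul_assoc, ← ENNReal.mul_rpow_of_nonneg _ _ hd,
          ENNReal.coe_inv (Dilation.ratio_ne_zero f), ENNReal.mul_inv_cancel hr ENNReal.coe_ne_top,
          ENNReal.one_rpow, one_mul]

theorem hausdorffMeasure_restrict_range_dilation (hd : 0 ≤ d) (f : X →ᵈ Y) :
    μH[d].restrict (Set.range f) = (Dilation.ratio f : ℝ≥0∞) ^ d • μH[d].map f := by
  ext s hs
  have hf : Measurable f := (Dilation.lipschitz f).continuous.measurable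
  rw [Measure.restrict_apply hs, ← Set.image_preimage_eq_inter_range,
    hausdorffMeasure_image_dilation hd, Measure.smul_apply, Measure.map_apply hf hs, smul_eq_mul]

theorem setIntegral_range_dilation [CompleteSpace X] (hd : 0 ≤ d) (f : X →ᵈ Y) {G : Type*}
    [NormedAddCommGroup G] [NormedSpace ℝ G] (F : Y → G) :
    ∫ y in Set.range f, F y ∂μH[d] = (Dilation.ratio f : ℝ) ^ d • ∫ x, F (f x) ∂μH[d] := by
  rw [hausdorffMeasure_restrict_range_dilation hd, integral_smul_measure,
    (Dilation.isClosedEmbedding f).measurableEmbedding.integral_map, ← ENNReal.toReal_rpow,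
    ENNReal.coe_toReal]

end Dilation

section Slices

variable {E : Type*} [NormedAddCommGroup E] [InnerProductSpace ℝ E]

/-- The parametrization of the slice of the unit sphere by the affine subspace `w + V`, where
`w ∈ Vᗮ` and `‖w‖ < 1`, by the unit sphere of `V`. -/
noncomputable def sliceDilation (V : Submodule ℝ E) {w : E} (hw : ‖w‖ < 1) :
    sphere (0 : V) 1 →ᵈ E :=
  Dilation.mkOfDistEq (fun θ => w + √(1 - ‖w‖ ^ 2) • (θ : E)) <| by
    have hpos : 0 < √(1 - ‖w‖ ^ 2) := Real.sqrt_pos.mpr (by nlinarith [norm_nonneg w])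
    refine ⟨⟨√(1 - ‖w‖ ^ 2), hpos.le⟩, (NNReal.coe_ne_zero).mp hpos.ne', fun θ η => ?_⟩
    rw [dist_add_left, dist_smul₀, Real.norm_of_nonneg hpos.le]
    rfl

theorem sliceDilation_apply (V : Submodule ℝ E) {w : E} (hw : ‖w‖ < 1) (θ : sphere (0 : V) 1) :
    sliceDilation V hw θ = w + √(1 - ‖w‖ ^ 2) • (θ : E) :=
  rfl

variable {V : Submodule ℝ E}

theorem norm_add_of_mem_orthogonal {v w : E} (hv : v ∈ V) (hw : w ∈ Vᗮ) :
    ‖v + w‖ = √(‖v‖ ^ 2 + ‖w‖ ^ 2) := by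
  rw [← Real.sqrt_sq (norm_nonneg (v + w)), norm_add_sq_real,
    Submodule.inner_right_of_mem_orthogonal hv hw]
  simp

theorem range_sliceDilation {w : E} (hw : w ∈ Vᗮ) (hw₁ : ‖w‖ < 1) :
    Set.range (sliceDilation V hw₁) = sphere 0 1 ∩ AffineSubspace.mk' w V := by
  have hpos : 0 < 1 - ‖w‖ ^ 2 := by nlinarith [norm_nonneg w]
  ext x
  simp only [Set.mem_range, sliceDilation_apply, Set.mem_inter_iff, mem_sphere_zero_iff_norm,
    SetLike.mem_coe, AffineSubspace.mem_mk', vsub_eq_sub]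
  constructor
  · rintro ⟨θ, rfl⟩
    have hθ : ‖(θ : E)‖ = 1 := norm_eq_of_mem_sphere θ
    have hmem : √(1 - ‖w‖ ^ 2) • (θ : E) ∈ V := V.smul_mem _ (θ : V).2
    refine ⟨?_, by simpa using hmem⟩
    rw [add_comm, norm_add_of_mem_orthogonal hmem hw, norm_smul, hθ, mul_one, Real.norm_eq_abs,
      sq_abs, Real.sq_sqrt hpos.le, sub_add_cancel, Real.sqrt_one]
  · rintro ⟨hx, hxw⟩
    have hnorm : ‖x - w‖ = √(1 - ‖w‖ ^ 2) := by
      have hsum := norm_add_of_mem_orthogonal hxw hw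
      rw [sub_add_cancel, hx, eq_comm, Real.sqrt_eq_one] at hsum
      rw [← hsum, add_sub_cancel_right, Real.sqrt_sq (norm_nonneg _)]
    refine ⟨⟨NormedSpace.normalize ⟨x - w, hxw⟩, ?_⟩, ?_⟩
    · rw [mem_sphere_zero_iff_norm, NormedSpace.norm_normalize_eq_one_iff, Ne, ← norm_eq_zero]
      exact hnorm.trans_ne (Real.sqrt_pos.mpr hpos).ne'
    · change w + √(1 - ‖w‖ ^ 2) • ((NormedSpace.normalize (⟨x - w, hxw⟩ : V) : V) : E) = x
      have hsmul := congrArg V.subtype (NormedSpace.norm_smul_normalize (⟨x - w, hxw⟩ : V))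
      simp only [map_smul, Submodule.subtype_apply, Submodule.coe_norm, hnorm] at hsmul
      rw [hsmul, add_sub_cancel]

theorem exists_normalize_add_eq_sliceDilation {v : E} (hv : v ∈ Vᗮ) {r : ℝ} (hr : 0 < r) :
    ∃ w ∈ Vᗮ, ∃ hw : ‖w‖ < 1, ∀ θ : sphere (0 : V) 1,
      NormedSpace.normalize (r • (θ : E) + v) = sliceDilation V hw θ := by
  set R := √(r ^ 2 + ‖v‖ ^ 2)
  have hR : 0 < R := Real.sqrt_pos.mpr (by positivity)
  have hR₂ : R ^ 2 = r ^ 2 + ‖v‖ ^ 2 := Real.sq_sqrt (by positivity)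
  have hw : ‖R⁻¹ • v‖ = R⁻¹ * ‖v‖ := by rw [norm_smul, norm_inv, Real.norm_of_nonneg hR.le]
  have hradius : √(1 - ‖R⁻¹ • v‖ ^ 2) = R⁻¹ * r := by
    rw [Real.sqrt_eq_iff_mul_self_eq_of_pos (by positivity), hw]
    field_simp
    linarith
  refine ⟨R⁻¹ • v, Vᗮ.smul_mem _ hv, ?_, fun θ => ?_⟩
  · rw [hw, inv_mul_lt_one₀ hR]
    exact lt_of_pow_lt_pow_left₀ 2 hR.le (by rw [hR₂]; linarith [pow_pos hr 2])
  · have hθ : ‖(θ : E)‖ = 1 := norm_eq_of_mem_sphere θ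
    have hnorm : ‖r • (θ : E) + v‖ = R := by
      rw [norm_add_of_mem_orthogonal (V.smul_mem _ (θ : V).2) hv, norm_smul, hθ, mul_one,
        Real.norm_of_nonneg hr.le]
    rw [NormedSpace.normalize, hnorm, sliceDilation_apply, hradius, smul_add, smul_smul, add_comm]

variable [MeasurableSpace E] [BorelSpace E] [FiniteDimensional ℝ E] [Nontrivial V]

theorem integrableOn_slice {w : E} (hw : w ∈ Vᗮ) (hw₁ : ‖w‖ < 1) {f : E → ℝ}
    (hf : ContinuousOn f (sphere 0 1)) :
    IntegrableOn f (sphere 0 1 ∩ AffineSubspace.mk' w V) μH[(Module.finrank ℝ V : ℝ) - 1] := by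
  have hcompact : IsCompact (sphere 0 1 ∩ AffineSubspace.mk' w V : Set E) :=
    (isCompact_sphere 0 1).inter_right (AffineSubspace.closed_of_finiteDimensional _)
  have hfinite : μH[(Module.finrank ℝ V : ℝ) - 1] (sphere 0 1 ∩ AffineSubspace.mk' w V : Set E)
      < ∞ := by
    rw [← range_sliceDilation hw hw₁, ← Set.image_univ,
      hausdorffMeasure_image_dilation cast_finrank_sub_one_nonneg]
    exact ENNReal.mul_lt_top (ENNReal.rpow_lt_top_of_nonneg cast_finrank_sub_one_nonneg
      ENNReal.coe_ne_top) (measure_lt_top _ _)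
  have hcont := hf.mono (Set.inter_subset_left (t := (AffineSubspace.mk' w V : Set E)))
  obtain ⟨C, hC⟩ := hcompact.exists_bound_of_continuousOn hcont
  exact .of_bound hfinite (hcont.aestronglyMeasurable hcompact.measurableSet) C
    (ae_restrict_of_forall_mem hcompact.measurableSet hC)

theorem integral_sliceDilation_eq_zero {G : Type*} [NormedAddCommGroup G] [NormedSpace ℝ G]
    {F : E → G} {w : E} (hw : w ∈ Vᗮ) (hw₁ : ‖w‖ < 1)
    (hF : ∫ x in sphere 0 1 ∩ AffineSubspace.mk' w V, F x ∂μH[(Module.finrank ℝ V : ℝ) - 1] = 0) :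
    ∫ θ, F (sliceDilation V hw₁ θ) ∂(volume : Measure V).toSphere = 0 := by
  rw [← range_sliceDilation hw hw₁, setIntegral_range_dilation cast_finrank_sub_one_nonneg,
    smul_eq_zero_iff_right (Real.rpow_pos_of_pos
      (NNReal.coe_pos.mpr (Dilation.ratio_pos (sliceDilation V hw₁))) _).ne'] at hF
  obtain ⟨c, hc⟩ := exists_toSphere_eq_smul_hausdorffMeasure (E := V)
  rw [hc, integral_smul_measure, hF, smul_zero]

end Slices

section Disintegration

variable {E : Type*} [NormedAddCommGroup E] [InnerProductSpace ℝ E] [FiniteDimensional ℝ E]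
  (V : Submodule ℝ E)

theorem add_orthogonal_eq_comp_toLp : (fun q : V × Vᗮ => (q.1 + q.2 : E)) =
    V.orthogonalDecomposition.symm ∘ WithLp.toLp 2 := by
  ext q
  simp

variable [MeasurableSpace E] [BorelSpace E]

theorem measurePreserving_add_orthogonal :
    MeasurePreserving (fun q : V × Vᗮ => (q.1 + q.2 : E)) := by
  rw [add_orthogonal_eq_comp_toLp]
  exact V.orthogonalDecomposition.symm.measurePreserving.comp (WithLp.volume_preserving_toLp _ _)

theorem measurableEmbedding_add_orthogonal :
    MeasurableEmbedding (fun q : V × Vᗮ => (q.1 + q.2 : E)) := by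
  rw [add_orthogonal_eq_comp_toLp]
  exact V.orthogonalDecomposition.symm.toHomeomorph.measurableEmbedding.comp
    (MeasurableEquiv.toLp 2 _).measurableEmbedding

variable {V} [Nontrivial V] {G : Type*} [NormedAddCommGroup G] [NormedSpace ℝ G]

theorem integral_indicator_ball_comp_normalize_add_eq_zero {F : E → G}
    (hslice : ∀ w ∈ Vᗮ, ‖w‖ < 1 → ∫ x in sphere 0 1 ∩ AffineSubspace.mk' w V, F x
      ∂μH[(Module.finrank ℝ V : ℝ) - 1] = 0) {v : E} (hv : v ∈ Vᗮ) {r : ℝ} (hr : 0 < r) :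
    ∫ θ : sphere (0 : V) 1, (ball (0 : E) 1).indicator
      (fun x => F (NormedSpace.normalize x)) (r • (θ : E) + v)
        ∂(volume : Measure V).toSphere = 0 := by
  obtain ⟨w, hw, hw₁, hnormalize⟩ := exists_normalize_add_eq_sliceDilation hv hr
  have hmem : ∀ θ : sphere (0 : V) 1,
      r • (θ : E) + v ∈ ball (0 : E) 1 ↔ √(r ^ 2 + ‖v‖ ^ 2) < 1 := fun θ => by
    have hθ : ‖(θ : E)‖ = 1 := norm_eq_of_mem_sphere θ
    rw [mem_ball_zero_iff, norm_add_of_mem_orthogonal (V.smul_mem _ (θ : V).2) hv, norm_smul, hθ,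
      mul_one, Real.norm_of_nonneg hr.le]
  simp only [Set.indicator, hmem, hnormalize]
  split_ifs
  · exact integral_sliceDilation_eq_zero hw hw₁ (hslice w hw hw₁)
  · exact integral_zero _ _

theorem integral_toSphere_eq_zero_of_slices [CompleteSpace G] {F : E → G} (hF : Continuous F)
    (hslice : ∀ w ∈ Vᗮ, ‖w‖ < 1 → ∫ x in sphere 0 1 ∩ AffineSubspace.mk' w V, F x
      ∂μH[(Module.finrank ℝ V : ℝ) - 1] = 0) :
    ∫ θ, F θ ∂(volume : Measure E).toSphere = 0 := by
  have : Nontrivial E := V.injective_subtype.nontrivial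
  have hn : (Module.finrank ℝ E : ℝ)⁻¹ ≠ 0 := inv_ne_zero (mod_cast Module.finrank_pos.ne')
  have hint := ((measurePreserving_add_orthogonal V).integrable_comp_emb
    (measurableEmbedding_add_orthogonal V)).mpr <|
      (integrableOn_ball_comp_normalize volume hF 1).integrable_indicator measurableSet_ball
  rw [← smul_eq_zero_iff_right hn, ← setIntegral_ball_comp_normalize volume hF,
    ← integral_indicator measurableSet_ball, ← (measurePreserving_add_orthogonal V).integral_comp
      (measurableEmbedding_add_orthogonal V), Measure.volume_eq_prod]
  refine (integral_prod_symm _ hint).trans (integral_eq_zero_of_ae ?_)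
  filter_upwards [hint.prod_left_ae] with v hv
  refine (integral_eq_integral_integral_toSphere volume hv).trans (integral_eq_zero_of_ae ?_)
  exact .of_forall fun r => integral_indicator_ball_comp_normalize_add_eq_zero hslice v.2 r.2

theorem integral_toSphere_cexp_inner_mul_eq_zero {h : E → ℝ} (hh : Continuous h) {ξ : E}
    (hξ : V ≤ (ℝ ∙ ξ)ᗮ)
    (hslice : ∀ w ∈ Vᗮ, ‖w‖ < 1 → ∫ x in sphere 0 1 ∩ AffineSubspace.mk' w V, h x
      ∂μH[(Module.finrank ℝ V : ℝ) - 1] = 0) :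
    ∫ x, Complex.exp (⟪(x : E), ξ⟫_ℝ * Complex.I) * h x ∂(volume : Measure E).toSphere = 0 := by
  refine integral_toSphere_eq_zero_of_slices (V := V)
    (F := fun x => Complex.exp (⟪x, ξ⟫_ℝ * Complex.I) * h x) (by fun_prop) fun w hw hw₁ => ?_
  have hinner : ∀ x ∈ sphere 0 1 ∩ (AffineSubspace.mk' w V : Set E), ⟪x, ξ⟫_ℝ = ⟪w, ξ⟫_ℝ :=
    fun x hx => by
      have := Submodule.mem_orthogonal_singleton_iff_inner_left.mp
        (hξ ((AffineSubspace.mem_mk').mp hx.2))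
      rwa [vsub_eq_sub, inner_sub_left, sub_eq_zero] at this
  have hmeas : MeasurableSet (sphere 0 1 ∩ (AffineSubspace.mk' w V : Set E)) :=
    (isClosed_sphere.inter (AffineSubspace.closed_of_finiteDimensional _)).measurableSet
  rw [setIntegral_congr_fun (g := fun x => Complex.exp (⟪w, ξ⟫_ℝ * Complex.I) * h x) hmeas
    fun x hx => by simp only [hinner x hx], integral_const_mul, integral_complex_ofReal,
    hslice w hw hw₁, Complex.ofReal_zero, mul_zero]

end Disintegration

section FourierUniqueness

variable {E : Type*} [NormedAddCommGroup E] [InnerProductSpace ℝ E] [MeasurableSpace E]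
  {ν : Measure E} {H : E → ℝ}

theorem charFun_withDensity_ofReal (hH : AEMeasurable H ν) (ξ : E) :
    charFun (ν.withDensity fun y => .ofReal (H y)) ξ =
      ∫ y, Complex.exp (⟪y, ξ⟫_ℝ * Complex.I) * (max (H y) 0 : ℝ) ∂ν := by
  rw [charFun_apply, integral_withDensity_eq_integral_toReal_smul₀ hH.ennreal_ofReal
    (.of_forall fun _ => ENNReal.ofReal_lt_top)]
  simp only [ENNReal.toReal_ofReal', Complex.real_smul, mul_comm]

variable [BorelSpace E] [SecondCountableTopology E]

theorem integrable_cexp_inner_mul_ofReal (hH : Integrable H ν) (ξ : E) :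
    Integrable (fun y => Complex.exp (⟪y, ξ⟫_ℝ * Complex.I) * (H y : ℂ)) ν :=
  hH.ofReal.bdd_mul (c := 1) (by fun_prop)
    (.of_forall fun y => (Complex.norm_exp_ofReal_mul_I _).le)

theorem ae_eq_zero_of_forall_integral_cexp_inner_mul_eq_zero [CompleteSpace E]
    (hH : Integrable H ν)
    (hzero : ∀ ξ, ∫ y, Complex.exp (⟪y, ξ⟫_ℝ * Complex.I) * H y ∂ν = 0) : H =ᵐ[ν] 0 := by
  have := isFiniteMeasure_withDensity_ofReal hH.hasFiniteIntegral
  have := isFiniteMeasure_withDensity_ofReal hH.neg.hasFiniteIntegral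
  have hdensity : ν.withDensity (fun y => .ofReal (H y)) =
      ν.withDensity fun y => .ofReal ((-H) y) := by
    refine Measure.ext_of_charFun (funext fun ξ => ?_)
    rw [charFun_withDensity_ofReal hH.aemeasurable, charFun_withDensity_ofReal hH.neg.aemeasurable,
      ← sub_eq_zero, ← integral_sub (integrable_cexp_inner_mul_ofReal hH.pos_part ξ)
        (integrable_cexp_inner_mul_ofReal hH.neg.pos_part ξ), ← hzero ξ]
    refine integral_congr_ae (.of_forall fun y => ?_)
    simp only [← mul_sub, ← Complex.ofReal_sub, Pi.neg_apply, max_zero_sub_max_neg_zero_eq_self]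
  filter_upwards [(withDensity_eq_iff hH.aemeasurable.ennreal_ofReal
    hH.neg.aemeasurable.ennreal_ofReal hH.lintegral_lt_top.ne).mp hdensity] with y hy
  rcases le_total 0 (H y) with h | h
  · rw [Pi.neg_apply, ENNReal.ofReal_of_nonpos (neg_nonpos.mpr h), ENNReal.ofReal_eq_zero] at hy
    exact hy.antisymm h
  · rw [Pi.neg_apply, ENNReal.ofReal_of_nonpos h, eq_comm, ENNReal.ofReal_eq_zero] at hy
    exact h.antisymm (neg_nonpos.mp hy)

end FourierUniqueness

section Injectivity

theorem exists_submodule_between {K M : Type*} [DivisionRing K] [AddCommGroup M] [Module K M]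
    [FiniteDimensional K M] {A B : Submodule K M} (hAB : A ≤ B) {k : ℕ}
    (hA : Module.finrank K A ≤ k) (hB : k ≤ Module.finrank K B) :
    ∃ V, A ≤ V ∧ V ≤ B ∧ Module.finrank K V = k := by
  induction k, hA using Nat.le_induction with
  | base => exact ⟨A, le_rfl, hAB, rfl⟩
  | succ m _ ih =>
    obtain ⟨V, hAV, hVB, hV⟩ := ih (Nat.le_of_succ_le hB)
    obtain ⟨x, hxB, hxV⟩ := SetLike.exists_of_lt <| hVB.lt_of_ne fun h => by
      rw [← h, hV] at hB
      exact Nat.not_succ_le_self m hB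
    refine ⟨V ⊔ K ∙ x, le_sup_of_le_left hAV, sup_le hVB (by simpa using hxB), ?_⟩
    have hfinrank := Submodule.finrank_sup_add_finrank_inf_eq V (K ∙ x)
    have hx : x ≠ 0 := fun h => hxV (h ▸ V.zero_mem)
    rwa [disjoint_iff.mp ((Submodule.disjoint_span_singleton' hx).mpr hxV), finrank_bot,
      finrank_span_singleton hx, hV, add_zero] at hfinrank

variable {E : Type*} [NormedAddCommGroup E] [InnerProductSpace ℝ E] [FiniteDimensional ℝ E]
  [MeasurableSpace E] [BorelSpace E]

theorem eq_zero_of_forall_integral_cexp_inner_mul_eq_zero {a : E} (ha : a ≠ 0) {h : E → ℝ}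
    (hh : Continuous h) (heven : ∀ x ∈ sphere 0 1, h ((ℝ ∙ a)ᗮ.reflection x) = h x)
    (hzero : ∀ ξ ∈ (ℝ ∙ a)ᗮ, ∫ x, Complex.exp (⟪(x : E), ξ⟫_ℝ * Complex.I) * h x
      ∂(volume : Measure E).toSphere = 0) :
    ∀ x ∈ sphere 0 1, h x = 0 := by
  set σ := (volume : Measure E).toSphere
  set P : sphere (0 : E) 1 → (ℝ ∙ a)ᗮ := fun x => (ℝ ∙ a)ᗮ.orthogonalProjectionOnto x
  have hP : Continuous P := by fun_prop
  have hH : Continuous (h ∘ hemisphereLift a) := hh.comp (continuous_hemisphereLift a)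
  have hHP : ∀ x, h (hemisphereLift a (P x)) = h x := fun x => by
    rcases hemisphereLift_orthogonalProjectionOnto_eq_or ha (norm_eq_of_mem_sphere x) with hx | hx
    · rw [hx]
    · rw [hx, heven x x.2]
  have hint : Integrable (h ∘ hemisphereLift a) (σ.map P) := by
    rw [integrable_map_measure hH.aestronglyMeasurable hP.aemeasurable, ← integrableOn_univ]
    exact (hH.comp hP).continuousOn.integrableOn_compact isCompact_univ
  have hae := ae_eq_zero_of_forall_integral_cexp_inner_mul_eq_zero hint fun ξ => by
    rw [integral_map hP.aemeasurable
      (integrable_cexp_inner_mul_ofReal hint ξ).aestronglyMeasurable, ← hzero ξ ξ.2]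
    refine integral_congr_ae (.of_forall fun x => ?_)
    simp only [Function.comp_apply, hHP, P,
      Submodule.inner_orthogonalProjectionOnto_eq_of_mem_right]
  have hae' : (fun x : sphere (0 : E) 1 => h x) =ᵐ[σ] fun _ => 0 := by
    filter_upwards [ae_of_ae_map hP.aemeasurable hae] with x hx
    rwa [← hHP x]
  have heq := (hh.comp continuous_subtype_val).ae_eq_iff_eq σ continuous_const |>.mp hae'
  exact fun x hx => congrFun heq ⟨x, hx⟩

theorem statement2_general {k : ℕ} (hk : 0 < k) (hkE : k < Module.finrank ℝ E) {a : E}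
    (ha : a ≠ 0) {f g : E → ℝ} (hf : ContinuousOn f (sphere 0 1))
    (hg : ContinuousOn g (sphere 0 1))
    (hfeven : ∀ x ∈ sphere 0 1, f ((ℝ ∙ a)ᗮ.reflection x) = f x)
    (hgeven : ∀ x ∈ sphere 0 1, g ((ℝ ∙ a)ᗮ.reflection x) = g x)
    (heq : ∀ ζ : AffineSubspace ℝ E, Module.finrank ℝ ζ.direction = k → a ∈ ζ.direction →
      (∃ z ∈ ζ, ‖z‖ < 1) →
      ∫ x in sphere 0 1 ∩ ζ, f x ∂μH[(k : ℝ) - 1] = ∫ x in sphere 0 1 ∩ ζ, g x ∂μH[(k : ℝ) - 1]) :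
    ∀ x ∈ sphere 0 1, f x = g x := by
  obtain ⟨h, hh⟩ := ContinuousMap.exists_restrict_eq isClosed_sphere
    ⟨(sphere 0 1).domRestrict (f - g), (hf.sub hg).domRestrict⟩
  have hval : ∀ x ∈ sphere 0 1, h x = f x - g x := fun x hx => DFunLike.congr_fun hh ⟨x, hx⟩
  suffices ∀ x ∈ sphere 0 1, h x = 0 from
    fun x hx => sub_eq_zero.mp ((hval x hx).symm.trans (this x hx))
  refine eq_zero_of_forall_integral_cexp_inner_mul_eq_zero ha h.continuous (fun x hx => ?_)
    fun ξ hξ => ?_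
  · rw [hval x hx, hval _ (by simpa using hx), hfeven x hx, hgeven x hx]
  have hspan : ℝ ∙ a ≤ (ℝ ∙ ξ)ᗮ := by
    rwa [Submodule.span_singleton_le_iff_mem, Submodule.mem_orthogonal_singleton_iff_inner_left,
      ← Submodule.mem_orthogonal_singleton_iff_inner_right]
  have hfinrank : k ≤ Module.finrank ℝ (ℝ ∙ ξ)ᗮ := by
    have hspan_le : Module.finrank ℝ (ℝ ∙ ξ) ≤ 1 := by simpa using finrank_span_le_card {ξ}
    have := (ℝ ∙ ξ).finrank_add_finrank_orthogonal
    lia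
  obtain ⟨V, haV, hVξ, rfl⟩ := exists_submodule_between hspan
    ((finrank_span_singleton ha).trans_le hk) hfinrank
  have : Nontrivial V := Module.finrank_pos_iff.mp hk
  refine integral_toSphere_cexp_inner_mul_eq_zero h.continuous hVξ fun w hw hw₁ => ?_
  have hmeas : MeasurableSet (sphere 0 1 ∩ (AffineSubspace.mk' w V : Set E)) :=
    (isClosed_sphere.inter (AffineSubspace.closed_of_finiteDimensional _)).measurableSet
  rw [setIntegral_congr_fun hmeas fun x hx => hval x hx.1, integral_sub
    (integrableOn_slice hw hw₁ hf) (integrableOn_slice hw hw₁ hg), sub_eq_zero]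
  exact heq _ (by rw [AffineSubspace.direction_mk'])
    (by rw [AffineSubspace.direction_mk']; exact haV (Submodule.mem_span_singleton_self a))
    ⟨w, AffineSubspace.self_mem_mk' w V, hw₁⟩

end Injectivity

theorem reflMap_eq_reflection {n : ℕ} (a x : Euc (n + 1)) :
    reflMap a x = (ℝ ∙ a)ᗮ.reflection x := by
  rw [Submodule.reflection_orthogonal_apply, Submodule.reflection_singleton_apply, neg_sub,
    reflMap, real_inner_comm, RCLike.ofReal_real_eq_id, id]
  module

/-- Injectivity of the parallel slice transform on even functions:
if `f, g` are continuous on `S^n`, invariant under the reflection `R_a`, and have equal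
integrals over all sections of `S^n` by `k`-planes parallel to `a` meeting the open unit
ball, then `f = g` on `S^n`. -/
theorem statement2 (n k : ℕ) (hn : 2 ≤ n) (hk : 1 < k) (hkn : k ≤ n)
    (a : Euc (n + 1)) (ha : a ≠ 0)
    (f g : Euc (n + 1) → ℝ)
    (hf : ContinuousOn f (sphere (0 : Euc (n + 1)) 1))
    (hg : ContinuousOn g (sphere (0 : Euc (n + 1)) 1))
    (hfeven : ∀ x ∈ sphere (0 : Euc (n + 1)) 1, f (reflMap a x) = f x)
    (hgeven : ∀ x ∈ sphere (0 : Euc (n + 1)) 1, g (reflMap a x) = g x)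
    (heq : ∀ ζ : AffineSubspace ℝ (Euc (n + 1)),
        Module.finrank ℝ ζ.direction = k → a ∈ ζ.direction →
        (∃ z ∈ ζ, ‖z‖ < 1) →
        (∫ x in sphere (0 : Euc (n + 1)) 1 ∩ (ζ : Set (Euc (n + 1))),
          f x ∂μH[(k : ℝ) - 1]) =
        ∫ x in sphere (0 : Euc (n + 1)) 1 ∩ (ζ : Set (Euc (n + 1))),
          g x ∂μH[(k : ℝ) - 1]) :
    ∀ x ∈ sphere (0 : Euc (n + 1)) 1, f x = g x := by
  simp only [reflMap_eq_reflection] at hfeven hgeven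
  exact statement2_general (Nat.zero_lt_of_lt hk) (by simpa using Nat.lt_succ_of_le hkn) ha hf hg
    hfeven hgeven heq
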